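/- Let N ≥ 3 and d ≥ 1 be integers. Suppose the regular N-gon admits a Hermitian psd lift of size d that is equivariant with respect to the rotation group Rot_N ≅ ℤ/Nℤ; i.e., suppose there exist: an ℝ-affine subspace L of the d×d complex matrices all of whose elements are Hermitian; an ℝ-linear map π from d×d complex Hermitian matrices to ℝ²; and a map ρ : ℤ/Nℤ → GL_d(ℂ) with ρ(g + g') = ρ(g)ρ(g') for all g, g'; such that: (1) conv(𝒳_N) = π({Y ∈ L : Y positive semidefinite}); (2) ρ(g) Y ρ(g)* ∈ L for all g ∈ ℤ/Nℤ and all Y ∈ L; and (3) π(ρ(g) Y ρ(g)*) = R_g · π(Y) for all g ∈ ℤ/Nℤ and all positive semidefinite Y ∈ L, where R_g is the rotation of ℝ² by angle 2πg/N and ρ(g)* is the conjugate transpose. Then there exists a set K ⊆ ℤ/Nℤ with |K| ≤ d that is sos-valid. -/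

import Mathlib

/-!
Let `K` be the set of frequencies `k` occurring in `ρ`. Each `exp(2πik/N)` with `k ∈ K` is an
eigenvalue of `ρ 1`, so `|K| ≤ d`, and by Fourier inversion the space `F` of functions supported on
`K` contains `j ↦ φ (ρ j)` for every linear form `φ` on matrices.

Let `Y₀ ∈ L` be a psd matrix over the vertex `(cos (π/N), sin (π/N))`, so that
`Yⱼ = ρ(j) Y₀ ρ(j)*` lies over the `j`-th vertex. The cone of sums of squared moduli of elements of
`F` is closed, so by Farkas' lemma it contains the facet function `l` as soon as `∑ cⱼ lⱼ ≥ 0`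
whenever `∑ cⱼ |hⱼ|² ≥ 0` for all `h ∈ F`. Factoring `Y₀ = B B*` shows that for such `c` the matrix
`∑ cⱼ Yⱼ` is psd, although the `cⱼ` may be negative. As `l` vanishes at the vertex of `Y₀`, we can
move from `Y₀` slightly towards `∑ cⱼ Yⱼ` inside `L` and the psd cone, and the facet inequality at
the resulting point is `∑ cⱼ lⱼ ≥ 0`.
-/

open Real Finset

/-- The cyclic distance on `ℤ/Nℤ`: `d(a,b) = min{|m| : m ∈ ℤ, m ≡ a − b (mod N)}`. -/
def cycDist (N : ℕ) (a b : ZMod N) : ℕ := min (a - b).val (b - a).val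

/-- `C ⊆ ℤ/Nℤ` has in-diameter at most `γ` if it is contained in an interval
`{x, x+1, …, x+γ}`. -/
def HasInDiamLE (N γ : ℕ) (C : Finset (ZMod N)) : Prop :=
  ∃ x : ZMod N, ∀ c ∈ C, ∃ t : ℕ, t ≤ γ ∧ c = x + (t : ZMod N)

/-- The pure frequency `e_k : ℤ/Nℤ → ℂ`, `e_k(j) = exp(2πi·kj/N)`. -/
noncomputable def freq (N : ℕ) (k j : ZMod N) : ℂ :=
  Complex.exp (2 * Real.pi * Complex.I * (k.val : ℂ) * (j.val : ℂ) / N)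

/-- `h : ℤ/Nℤ → ℂ` is supported on `K` if it is a `ℂ`-linear combination of the
pure frequencies `e_k`, `k ∈ K`. -/
def SupportedOn (N : ℕ) (K : Finset (ZMod N)) (h : ZMod N → ℂ) : Prop :=
  ∃ c : ZMod N → ℂ, h = fun j => ∑ k ∈ K, c k * freq N k j

/-- `K ⊆ ℤ/Nℤ` is sos-valid if the facet function `cos(π/N) − cos((2j+1)π/N)` of the
regular `N`-gon is a finite sum of squared moduli of functions supported on `K`. -/
def SosValid (N : ℕ) (K : Finset (ZMod N)) : Prop :=
  ∃ (m : ℕ) (h : Fin m → ZMod N → ℂ), (∀ i, SupportedOn N K (h i)) ∧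
    ∀ j : ZMod N,
      Real.cos (π / N) - Real.cos ((2 * (j.val : ℝ) + 1) * π / N) =
        ∑ i, Complex.normSq (h i j)

open Matrix
open scoped ComplexOrder

theorem isCompact_convexHull_of_finiteDimensional {E : Type*} [AddCommGroup E] [Module ℝ E]
    [TopologicalSpace E] [ContinuousAdd E] [ContinuousSMul ℝ E] [FiniteDimensional ℝ E]
    {s : Set E} (hs : IsCompact s) : IsCompact (convexHull ℝ s) := by
  -- By Carathéodory's theorem, `dim E + 1` points of `s` suffice.
  have hunion : convexHull ℝ s = ⋃ m ∈ Finset.range (Module.finrank ℝ E + 2),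
      (fun p : (Fin m → ℝ) × (Fin m → E) => ∑ i, p.1 i • p.2 i) ''
        (stdSimplex ℝ (Fin m) ×ˢ Set.univ.pi fun _ => s) := by
    apply Set.Subset.antisymm
    · intro x hx
      obtain ⟨ι, _, z, w, hz, hind, hw, hw1, hx⟩ := eq_pos_convex_span_of_mem_convexHull hx
      have hcard : Fintype.card ι ≤ Module.finrank ℝ E + 1 :=
        hind.card_le_finrank_succ.trans (Nat.add_le_add_right (Submodule.finrank_le _) 1)
      let e := Fintype.equivFin ι
      simp only [Set.mem_iUnion]
      refine ⟨Fintype.card ι, Finset.mem_range.2 (by omega), (w ∘ e.symm, z ∘ e.symm),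
        ⟨⟨fun i => (hw _).le, ?_⟩, fun i _ => hz (Set.mem_range_self _)⟩, ?_⟩
      · exact (e.symm.sum_comp w).trans hw1
      · exact (e.symm.sum_comp fun i => w i • z i).trans hx
    · simp only [Set.iUnion_subset_iff]
      rintro m - _ ⟨p, ⟨hp, hz⟩, rfl⟩
      exact mem_convexHull_of_exists_fintype p.1 p.2 hp.1 hp.2 (fun i => hz i trivial) rfl
  rw [hunion]
  refine (Finset.range _).isCompact_biUnion fun m _ => ?_
  refine ((isCompact_stdSimplex ℝ (Fin m)).prod (isCompact_univ_pi fun _ => hs)).image ?_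
  fun_prop

section ConicHull

open scoped Pointwise

theorem smul_mem_smul_convexHull_of_mem_hull {E : Type*} [AddCommGroup E] [Module ℝ E]
    {s : Set E} (e : E →ₗ[ℝ] ℝ) {δ : ℝ} (hδ : 0 < δ) (he : ∀ x ∈ s, δ ≤ e x) {y : E}
    (hy : y ∈ PointedCone.hull ℝ s) :
    0 ≤ e y ∧ δ • y ∈ e y • convexHull ℝ (insert 0 s) := by
  have hconv : Convex ℝ (convexHull ℝ (insert 0 s)) := convex_convexHull ℝ _
  have hzero : 0 ∈ convexHull ℝ (insert 0 s) := subset_convexHull ℝ _ (Set.mem_insert _ _)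
  induction hy using Submodule.span_induction with
  | mem x hx =>
    have hex : 0 < e x := hδ.trans_le (he x hx)
    refine ⟨hex.le, (δ / e x) • x, ?_, ?_⟩
    · exact hconv.smul_mem_of_zero_mem hzero (subset_convexHull ℝ _ (Set.mem_insert_of_mem _ hx))
        ⟨by positivity, (div_le_one hex).2 (he x hx)⟩
    · simp only [smul_smul, mul_div_cancel₀ δ hex.ne']
  | zero => exact ⟨by rw [map_zero], 0, hzero, by simp⟩
  | add x y _ _ hx hy =>
    rw [map_add, smul_add, hconv.add_smul hx.1 hy.1]
    exact ⟨add_nonneg hx.1 hy.1, Set.add_mem_add hx.2 hy.2⟩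
  | smul r x _ hx =>
    change 0 ≤ e ((r : ℝ) • x) ∧ δ • (r : ℝ) • x ∈ e ((r : ℝ) • x) • convexHull ℝ (insert 0 s)
    rw [map_smul, smul_eq_mul, mul_smul, smul_comm δ]
    exact ⟨mul_nonneg r.2 hx.1, Set.smul_mem_smul_set hx.2⟩

theorem isClosed_hull_of_isCompact {E : Type*} [AddCommGroup E] [Module ℝ E]
    [TopologicalSpace E] [T2Space E] [ContinuousAdd E] [ContinuousSMul ℝ E]
    [FiniteDimensional ℝ E] {s : Set E} (hs : IsCompact s) (e : E →L[ℝ] ℝ)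
    (he : ∀ x ∈ s, 0 < e x) : IsClosed (PointedCone.hull ℝ s : Set E) := by
  obtain ⟨δ, hδ, heδ⟩ := hs.exists_forall_le' e.continuous.continuousOn he
  set K := convexHull ℝ (insert 0 s)
  have : CompactSpace K :=
    isCompact_iff_compactSpace.1 (isCompact_convexHull_of_finiteDimensional (hs.insert 0))
  have hK_le : K ⊆ PointedCone.hull ℝ s :=
    convexHull_min (Set.insert_subset (zero_mem _) Submodule.subset_span) (PointedCone.convex _)
  have hproj : (PointedCone.hull ℝ s : Set E) =
      Prod.snd '' {p : K × E | 0 ≤ e p.2 ∧ e p.2 • (p.1 : E) = δ • p.2} := by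
    ext y
    constructor
    · intro hy
      obtain ⟨hey, x, hx, hxy⟩ := smul_mem_smul_convexHull_of_mem_hull e.toLinearMap hδ heδ hy
      exact ⟨(⟨x, hx⟩, y), ⟨hey, hxy⟩, rfl⟩
    · rintro ⟨⟨x, y⟩, ⟨hey, hxy⟩, rfl⟩
      have : y = (δ⁻¹ * e y) • (x : E) := by rw [mul_smul, hxy, inv_smul_smul₀ hδ.ne']
      rw [this]
      exact PointedCone.smul_mem _ (by positivity) (hK_le x.2)
  rw [hproj]
  refine isClosedMap_snd_of_compactSpace _ (IsClosed.and ?_ ?_)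
  · exact isClosed_le (by fun_prop) (by fun_prop)
  · exact isClosed_eq (by fun_prop) (by fun_prop)

end ConicHull

section SumOfSquares

variable {ι : Type*}

/-- The pointwise squared modulus `j ↦ |h j|²` of a complex function. -/
def sqModulus (h : ι → ℂ) : ι → ℝ := fun j => Complex.normSq (h j)

/-- The cone of sums of squared moduli of functions in `F`, as the conic hull of the squared moduli;
weights need no separate treatment since `t |h|² = |√t h|²` for `t ≥ 0`. -/
def sosCone (F : Submodule ℂ (ι → ℂ)) : PointedCone ℝ (ι → ℝ) :=
  PointedCone.hull ℝ (sqModulus '' F)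

theorem sqModulus_ofReal_smul (r : ℝ) (h : ι → ℂ) :
    sqModulus ((r : ℂ) • h) = (r * r) • sqModulus h := by
  funext j
  simp [sqModulus]

theorem exists_eq_sum_sqModulus_of_mem_sosCone {F : Submodule ℂ (ι → ℂ)} {l : ι → ℝ}
    (hl : l ∈ sosCone F) :
    ∃ (m : ℕ) (h : Fin m → ι → ℂ), (∀ i, h i ∈ F) ∧ l = ∑ i, sqModulus (h i) := by
  obtain ⟨m, t, g, rfl⟩ := Submodule.mem_span_set'.1 hl
  choose h hF hg using fun i => (g i).2
  refine ⟨m, fun i => ((√(t i : ℝ) : ℝ) : ℂ) • h i, fun i => F.smul_mem _ (hF i),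
    Finset.sum_congr rfl fun i _ => ?_⟩
  rw [sqModulus_ofReal_smul, Real.mul_self_sqrt (t i).2, hg]
  rfl

theorem continuous_sqModulus : Continuous (sqModulus : (ι → ℂ) → ι → ℝ) :=
  continuous_pi fun j => Complex.continuous_normSq.comp (continuous_apply j)

theorem sum_sqModulus_pos [Fintype ι] {h : ι → ℂ} (hh : h ≠ 0) : 0 < ∑ j, sqModulus h j := by
  obtain ⟨j, hj⟩ := Function.ne_iff.1 hh
  exact Finset.sum_pos' (fun _ _ => Complex.normSq_nonneg _)
    ⟨j, Finset.mem_univ j, Complex.normSq_pos.2 hj⟩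

theorem sosCone_eq_hull_sphere [Fintype ι] (F : Submodule ℂ (ι → ℂ)) :
    sosCone F = PointedCone.hull ℝ (sqModulus '' (F ∩ Metric.sphere 0 1)) := by
  refine le_antisymm (Submodule.span_le.2 ?_)
    (Submodule.span_mono (Set.image_mono Set.inter_subset_left))
  rintro _ ⟨h, hF, rfl⟩
  rcases eq_or_ne h 0 with rfl | hh
  · have hzero : sqModulus (0 : ι → ℂ) = 0 := by
      funext j
      simp [sqModulus]
    rw [hzero]
    exact zero_mem _
  · have hnorm : ‖h‖ ≠ 0 := norm_ne_zero_iff.2 hh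
    have hscale : sqModulus h = (‖h‖ * ‖h‖) • sqModulus (((‖h‖⁻¹ : ℝ) : ℂ) • h) := by
      rw [← sqModulus_ofReal_smul, smul_smul, ← Complex.ofReal_mul, mul_inv_cancel₀ hnorm,
        Complex.ofReal_one, one_smul]
    rw [hscale]
    refine PointedCone.smul_mem _ (mul_self_nonneg _) (PointedCone.subset_hull ⟨_, ⟨?_, ?_⟩, rfl⟩)
    · exact F.smul_mem _ hF
    · simp [norm_smul, hnorm]

theorem isClosed_sosCone [Finite ι] (F : Submodule ℂ (ι → ℂ)) :
    IsClosed (sosCone F : Set (ι → ℝ)) := by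
  cases nonempty_fintype ι
  rw [sosCone_eq_hull_sphere]
  have hcompact : IsCompact ((F : Set (ι → ℂ)) ∩ Metric.sphere 0 1) :=
    (isCompact_sphere 0 1).inter_left F.closed_of_finiteDimensional
  refine isClosed_hull_of_isCompact (hcompact.image continuous_sqModulus)
    (∑ j, ContinuousLinearMap.proj j) ?_
  rintro _ ⟨h, ⟨-, hh⟩, rfl⟩
  simpa using sum_sqModulus_pos (ne_zero_of_mem_unit_sphere ⟨h, hh⟩)

theorem mem_sosCone_of_forall_dotProduct_nonneg [Fintype ι] {F : Submodule ℂ (ι → ℂ)} {l : ι → ℝ}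
    (hl : ∀ c : ι → ℝ, (∀ h ∈ F, 0 ≤ c ⬝ᵥ sqModulus h) → 0 ≤ c ⬝ᵥ l) : l ∈ sosCone F := by
  classical
  by_contra hnot
  obtain ⟨f, hf, hfl⟩ := ProperCone.hyperplane_separation_point
    (⟨sosCone F, isClosed_sosCone F⟩ : ProperCone ℝ (ι → ℝ)) hnot
  have hf_eq (x : ι → ℝ) : f x = (fun i => f fun j => if i = j then 1 else 0) ⬝ᵥ x := by
    rw [dotProduct_comm]
    exact LinearMap.pi_apply_eq_sum_univ f.toLinearMap x
  refine hfl.not_ge ?_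
  rw [hf_eq]
  refine hl _ fun h hF => ?_
  rw [← hf_eq]
  exact hf _ (PointedCone.subset_hull ⟨h, hF, rfl⟩)

end SumOfSquares

theorem sum_mul_slack_nonneg_of_tight {ι E : Type*} [Fintype ι] [AddCommGroup E]
    [PartialOrder E] [IsOrderedAddMonoid E] [Module ℝ E] [PosSMulMono ℝ E]
    {L : AffineSubspace ℝ E} {f : E →ₗ[ℝ] ℝ} {b : ℝ} (hf : ∀ y ∈ L, 0 ≤ y → f y ≤ b)
    {y : ι → E} (hyL : ∀ j, y j ∈ L) {y₀ : E} (hy₀L : y₀ ∈ L) (hy₀ : 0 ≤ y₀) (htight : f y₀ = b)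
    {c : ι → ℝ} (hc : 0 ≤ ∑ j, c j • y j) : 0 ≤ ∑ j, c j * (b - f (y j)) := by
  set s := ∑ j, c j
  have hs : 0 ≤ |s| + 1 - s := by linarith [le_abs_self s]
  -- A step from `y₀` towards `∑ j, c j • y j`, short enough that `y₀` keeps a nonnegative weight.
  set ε := (|s| + 1)⁻¹
  have hε : 0 < ε := by positivity
  set z := ε • ∑ j, c j • (y j - y₀) + y₀
  have hzL : z ∈ L := by
    refine AffineSubspace.vadd_mem_of_mem_direction (Submodule.smul_mem _ _ ?_) hy₀L
    exact Submodule.sum_mem _ fun j _ =>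
      Submodule.smul_mem _ _ (AffineSubspace.vsub_mem_direction (hyL j) hy₀L)
  have hz : 0 ≤ z := by
    have hz_eq : z = ε • (∑ j, c j • y j + (|s| + 1 - s) • y₀) := by
      have hstep : ε • (|s| + 1) • y₀ = y₀ := by
        rw [smul_smul, inv_mul_cancel₀ (by positivity), one_smul]
      simp only [z, smul_sub, Finset.sum_sub_distrib, ← Finset.sum_smul, sub_smul, smul_add, hstep]
      abel
    rw [hz_eq]
    exact smul_nonneg hε.le (add_nonneg hc (smul_nonneg hs hy₀))
  have hfz : f z = b - ε * ∑ j, c j * (b - f (y j)) := by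
    simp only [z, map_add, map_smul, map_sum, map_sub, htight, smul_eq_mul, mul_sub,
      Finset.sum_sub_distrib]
    ring
  have := hf z hzL hz
  exact nonneg_of_mul_nonneg_right (by linarith) hε

section ConjugateOrbit

variable {ι n : Type*} [Fintype n]

theorem star_dotProduct_mul_conjTranspose_self_mulVec {m : Type*} [Fintype m]
    (M : Matrix n m ℂ) (x : n → ℂ) :
    star x ⬝ᵥ (M * Mᴴ) *ᵥ x = ((∑ i, Complex.normSq ((star x ᵥ* M) i) : ℝ) : ℂ) := by
  rw [← mulVec_mulVec, dotProduct_mulVec, mulVec_conjTranspose]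
  simp only [dotProduct, Pi.star_apply, Complex.star_def, Complex.mul_conj, Complex.ofReal_sum]

theorem posSemidef_sum_smul_conj [Fintype ι] {F : Submodule ℂ (ι → ℂ)} {ρ : ι → Matrix n n ℂ}
    (hF : ∀ φ : Matrix n n ℂ →ₗ[ℂ] ℂ, (fun j => φ (ρ j)) ∈ F)
    {Y : Matrix n n ℂ} (hY : Y.PosSemidef) {c : ι → ℝ}
    (hc : ∀ h ∈ F, 0 ≤ c ⬝ᵥ sqModulus h) :
    (∑ j, c j • (ρ j * Y * (ρ j)ᴴ)).PosSemidef := by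
  refine .of_dotProduct_mulVec_nonneg ?_ fun x => ?_
  · refine isSelfAdjoint_sum _ fun j _ => IsSelfAdjoint.smul (.all _) ?_
    exact (hY.mul_mul_conjTranspose_same (ρ j)).isHermitian
  obtain ⟨B, rfl⟩ : ∃ B : Matrix n n ℂ, Y = B * Bᴴ := by
    classical
    open scoped MatrixOrder in
    exact CStarAlgebra.nonneg_iff_eq_mul_star_self.1 hY.nonneg
  have hquad (j : ι) : star x ⬝ᵥ (ρ j * (B * Bᴴ) * (ρ j)ᴴ) *ᵥ x =
      ((∑ i, Complex.normSq ((star x ᵥ* (ρ j * B)) i) : ℝ) : ℂ) := by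
    rw [← star_dotProduct_mul_conjTranspose_self_mulVec, conjTranspose_mul]
    simp only [Matrix.mul_assoc]
  have hcoeff (i : n) : (fun j => (star x ᵥ* (ρ j * B)) i) ∈ F :=
    hF (LinearMap.proj i ∘ₗ Matrix.vecMulBilin ℂ ℂ (star x) ∘ₗ LinearMap.mulRight ℂ B)
  have hsum : star x ⬝ᵥ (∑ j, c j • (ρ j * (B * Bᴴ) * (ρ j)ᴴ)) *ᵥ x =
      ((∑ i, c ⬝ᵥ sqModulus fun j => (star x ᵥ* (ρ j * B)) i : ℝ) : ℂ) := by
    simp only [sum_mulVec, dotProduct_sum, smul_mulVec, dotProduct_smul, hquad]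
    simp only [Complex.real_smul, ← Complex.ofReal_mul, ← Complex.ofReal_sum, Finset.mul_sum]
    rw [Finset.sum_comm]
    rfl
  rw [hsum, Complex.zero_le_real]
  exact Finset.sum_nonneg fun i _ => hc _ (hcoeff i)

open scoped MatrixOrder in
theorem slack_mem_sosCone_of_conj_orbit [Finite ι] {F : Submodule ℂ (ι → ℂ)}
    {ρ : ι → Matrix n n ℂ}
    (hF : ∀ φ : Matrix n n ℂ →ₗ[ℂ] ℂ, (fun j => φ (ρ j)) ∈ F)
    {L : AffineSubspace ℝ (Matrix n n ℂ)} {f : Matrix n n ℂ →ₗ[ℝ] ℝ} {b : ℝ}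
    (hf : ∀ Y ∈ L, Y.PosSemidef → f Y ≤ b) {Y : Matrix n n ℂ} (hYL : Y ∈ L) (hY : Y.PosSemidef)
    (htight : f Y = b) (horbit : ∀ j, ρ j * Y * (ρ j)ᴴ ∈ L) :
    (fun j => b - f (ρ j * Y * (ρ j)ᴴ)) ∈ sosCone F := by
  cases nonempty_fintype ι
  exact mem_sosCone_of_forall_dotProduct_nonneg fun _ hc =>
    sum_mul_slack_nonneg_of_tight (fun Z hZL hZ => hf Z hZL (nonneg_iff_posSemidef.1 hZ)) horbit
      hYL hY.nonneg htight (posSemidef_sum_smul_conj hF hY hc).nonneg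

end ConjugateOrbit

section Frequencies

variable {N : ℕ}

theorem supportedOn_iff_mem_span {K : Finset (ZMod N)} {h : ZMod N → ℂ} :
    SupportedOn N K h ↔ h ∈ Submodule.span ℂ (freq N '' K) := by
  rw [Submodule.mem_span_image_finset_iff_exists_fun]
  constructor
  · rintro ⟨c, rfl⟩
    refine ⟨fun k => c k, funext fun j => ?_⟩
    rw [← Finset.sum_coe_sort K, Finset.sum_apply]
    rfl
  · rintro ⟨c, rfl⟩
    refine ⟨Function.extend Subtype.val c 0, funext fun j => ?_⟩
    rw [← Finset.sum_coe_sort K, Finset.sum_apply]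
    simp only [Subtype.val_injective.extend_apply, Pi.smul_apply, smul_eq_mul]

variable [NeZero N]

theorem freq_eq_stdAddChar (k j : ZMod N) : freq N k j = ZMod.stdAddChar (k * j) := by
  have hcast : k * j = (((k.val * j.val : ℕ) : ℤ) : ZMod N) := by simp
  rw [hcast, ZMod.stdAddChar_coe, freq]
  push_cast
  ring_nf

open Classical in
/-- The frequencies occurring in a vector-valued function on `ℤ/Nℤ`: the support of its discrete
Fourier transform. -/
noncomputable def frequencies {E : Type*} [AddCommGroup E] [Module ℂ E] (Φ : ZMod N → E) :
    Finset (ZMod N) :=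
  {k | ZMod.dft Φ k ≠ 0}

theorem supportedOn_frequencies {E : Type*} [AddCommGroup E] [Module ℂ E] (Φ : ZMod N → E)
    (φ : E →ₗ[ℂ] ℂ) : SupportedOn N (frequencies Φ) fun j => φ (Φ j) := by
  refine ⟨fun k => (N : ℂ)⁻¹ * φ (ZMod.dft Φ k), funext fun j => ?_⟩
  have hinversion : Φ j = (N : ℂ)⁻¹ • ∑ k, ZMod.stdAddChar (k * j) • ZMod.dft Φ k := by
    rw [← ZMod.invDFT_apply, LinearEquiv.symm_apply_apply]
  have hvanish (k : ZMod N) (hk : k ∉ frequencies Φ) :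
      (N : ℂ)⁻¹ * φ (ZMod.dft Φ k) * freq N k j = 0 := by
    have hdft : ZMod.dft Φ k = 0 := by simpa [frequencies] using hk
    rw [hdft, map_zero, mul_zero, zero_mul]
  rw [Finset.sum_subset (Finset.subset_univ _) fun k _ => hvanish k, hinversion, map_smul, map_sum,
    smul_eq_mul, Finset.mul_sum]
  refine Finset.sum_congr rfl fun k _ => ?_
  rw [map_smul, smul_eq_mul, freq_eq_stdAddChar]
  ring

variable {n : Type*} [Fintype n] {ρ : ZMod N → Matrix n n ℂ}

theorem mul_dft_eq_stdAddChar_smul (hρ : ∀ g g', ρ (g + g') = ρ g * ρ g') (k : ZMod N) :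
    ρ 1 * ZMod.dft ρ k = ZMod.stdAddChar k • ZMod.dft ρ k := by
  rw [ZMod.dft_apply, Finset.mul_sum, Finset.smul_sum]
  refine Fintype.sum_equiv (Equiv.addLeft (1 : ZMod N)) _ _ fun j => ?_
  rw [Matrix.mul_smul, ← hρ, smul_smul, ← AddChar.map_add_eq_mul, Equiv.coe_addLeft]
  congr 2
  ring

theorem card_frequencies_le (hρ : ∀ g g', ρ (g + g') = ρ g * ρ g') :
    (frequencies ρ).card ≤ Fintype.card n := by
  classical
  have hcol (k : frequencies ρ) : ∃ i, (ZMod.dft ρ k).col i ≠ 0 := by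
    by_contra! hzero
    have hk : ZMod.dft ρ k ≠ 0 := by simpa [frequencies] using k.2
    exact hk (Matrix.ext fun a b => congrFun (hzero b) a)
  choose i hi using hcol
  have heigen (k : frequencies ρ) : Module.End.HasEigenvector (Matrix.toLin' (ρ 1))
      (ZMod.stdAddChar (k : ZMod N)) ((ZMod.dft ρ k).col (i k)) := by
    refine ⟨Module.End.mem_eigenspace_iff.2 (funext fun a => ?_), hi k⟩
    exact congrFun (congrFun (mul_dft_eq_stdAddChar_smul hρ k) a) (i k)
  have hindep := Module.End.eigenvectors_linearIndependent' _ _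
    (ZMod.injective_stdAddChar.comp Subtype.val_injective) _ heigen
  simpa using hindep.fintype_card_le_finrank

end Frequencies

section Polygon

variable {N : ℕ}

/-- The vertices of the regular `N`-gon, at the angles `(2i - 1)π/N` for `1 ≤ i ≤ N`, so that the
edge between the last and the first one is vertical. -/
def polygonVertices (N : ℕ) : Set (ℝ × ℝ) :=
  {p | ∃ i ∈ Finset.Icc (1 : ℕ) N,
    p = (Real.cos ((2 * (i : ℝ) - 1) * π / N), Real.sin ((2 * (i : ℝ) - 1) * π / N))}

theorem cos_le_cos_of_le_of_le_two_pi_sub {a θ : ℝ} (ha : 0 ≤ a) (hle : a ≤ θ)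
    (hge : θ ≤ 2 * π - a) : Real.cos θ ≤ Real.cos a := by
  rcases le_total θ π with hθ | hθ
  · exact Real.cos_le_cos_of_nonneg_of_le_pi ha hθ hle
  · rw [← Real.cos_two_pi_sub θ]
    exact Real.cos_le_cos_of_nonneg_of_le_pi ha (by linarith) (by linarith)

theorem fst_le_cos_of_mem_convexHull_polygonVertices {p : ℝ × ℝ}
    (hp : p ∈ convexHull ℝ (polygonVertices N)) : p.1 ≤ Real.cos (π / N) := by
  refine convexHull_min ?_ (convex_halfSpace_le (LinearMap.fst ℝ ℝ ℝ).isLinear _) hp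
  rintro _ ⟨i, hi, rfl⟩
  obtain ⟨hi_pos, hi_le⟩ := Finset.mem_Icc.1 hi
  have hN : (0 : ℝ) < N := by exact_mod_cast hi_pos.trans hi_le
  have hi_pos : (1 : ℝ) ≤ i := by exact_mod_cast hi_pos
  have hi_le : (i : ℝ) ≤ N := by exact_mod_cast hi_le
  refine cos_le_cos_of_le_of_le_two_pi_sub (by positivity) ?_ ?_
  · gcongr
    nlinarith [Real.pi_pos]
  · rw [le_sub_iff_add_le, ← add_div, div_le_iff₀ hN]
    nlinarith [Real.pi_pos]

theorem first_mem_polygonVertices [NeZero N] :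
    (Real.cos (π / N), Real.sin (π / N)) ∈ polygonVertices N := by
  refine ⟨1, Finset.mem_Icc.2 ⟨le_rfl, NeZero.one_le⟩, ?_⟩
  norm_num

theorem sosValid_of_mem_sosCone {K : Finset (ZMod N)}
    (hK : (fun j : ZMod N => Real.cos (π / N) - Real.cos ((2 * (j.val : ℝ) + 1) * π / N)) ∈
      sosCone (Submodule.span ℂ (freq N '' K))) : SosValid N K := by
  obtain ⟨m, h, hh, hsum⟩ := exists_eq_sum_sqModulus_of_mem_sosCone hK
  refine ⟨m, h, fun i => supportedOn_iff_mem_span.2 (hh i), fun j => ?_⟩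
  simpa [sqModulus] using congrFun hsum j

end Polygon

theorem equivariant_psd_lift_gives_sosValid_general {N : ℕ} [NeZero N] {n : Type*} [Fintype n]
    {L : AffineSubspace ℝ (Matrix n n ℂ)} {proj : Matrix n n ℂ →ₗ[ℝ] ℝ × ℝ}
    {ρ : ZMod N → Matrix n n ℂ} (hρ : ∀ g g', ρ (g + g') = ρ g * ρ g')
    (hlift : convexHull ℝ (polygonVertices N) = proj '' {Y | Y ∈ L ∧ Y.PosSemidef})
    (hinv : ∀ g, ∀ Y ∈ L, ρ g * Y * (ρ g)ᴴ ∈ L)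
    (hequiv : ∀ g, ∀ Y ∈ L, Y.PosSemidef →
      proj (ρ g * Y * (ρ g)ᴴ) =
        (Real.cos (2 * π * (g.val : ℝ) / N) * (proj Y).1 -
            Real.sin (2 * π * (g.val : ℝ) / N) * (proj Y).2,
         Real.sin (2 * π * (g.val : ℝ) / N) * (proj Y).1 +
            Real.cos (2 * π * (g.val : ℝ) / N) * (proj Y).2)) :
    ∃ K : Finset (ZMod N), K.card ≤ Fintype.card n ∧ SosValid N K := by
  refine ⟨frequencies ρ, card_frequencies_le hρ, sosValid_of_mem_sosCone ?_⟩
  have hfacet (Y : Matrix n n ℂ) (hYL : Y ∈ L) (hY : Y.PosSemidef) :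
      (proj Y).1 ≤ Real.cos (π / N) :=
    fst_le_cos_of_mem_convexHull_polygonVertices (hlift ▸ ⟨Y, ⟨hYL, hY⟩, rfl⟩)
  obtain ⟨Y, ⟨hYL, hY⟩, hYvertex⟩ := hlift ▸ subset_convexHull ℝ _ first_mem_polygonVertices
  have horbit (j : ZMod N) :
      (proj (ρ j * Y * (ρ j)ᴴ)).1 = Real.cos ((2 * (j.val : ℝ) + 1) * π / N) := by
    rw [hequiv j Y hYL hY, hYvertex]
    dsimp only
    rw [← Real.cos_add]
    ring_nf
  simp only [← horbit]
  exact slack_mem_sosCone_of_conj_orbit (f := LinearMap.fst ℝ ℝ ℝ ∘ₗ proj)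
    (fun φ => supportedOn_iff_mem_span.1 (supportedOn_frequencies ρ φ)) hfacet hYL hY
    (congrArg Prod.fst hYvertex) fun j => hinv j Y hYL

/-- Structure theorem: a `Rot_N`-equivariant Hermitian psd lift of size `d` of the
regular `N`-gon yields an sos-valid set of frequencies `K ⊆ ℤ/Nℤ` with `|K| ≤ d`. -/
theorem equivariant_psd_lift_gives_sosValid (N d : ℕ) (hN : 3 ≤ N) (hd : 1 ≤ d)
    (L : AffineSubspace ℝ (Matrix (Fin d) (Fin d) ℂ))
    (hHerm : ∀ Y ∈ L, Y.IsHermitian)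
    (π' : Matrix (Fin d) (Fin d) ℂ →ₗ[ℝ] ℝ × ℝ)
    (ρ : ZMod N → Matrix.GeneralLinearGroup (Fin d) ℂ)
    (hρ : ∀ g g' : ZMod N, ρ (g + g') = ρ g * ρ g')
    (hlift : convexHull ℝ
        {p : ℝ × ℝ | ∃ i ∈ Finset.Icc (1:ℕ) N,
          p = (Real.cos ((2 * (i : ℝ) - 1) * π / N),
               Real.sin ((2 * (i : ℝ) - 1) * π / N))} =
      π' '' {Y | Y ∈ L ∧ Y.PosSemidef})
    (hinv : ∀ g : ZMod N, ∀ Y ∈ L,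
      (ρ g : Matrix (Fin d) (Fin d) ℂ) * Y * (ρ g : Matrix (Fin d) (Fin d) ℂ)ᴴ ∈ L)
    (hequiv : ∀ g : ZMod N, ∀ Y ∈ L, Y.PosSemidef →
      π' ((ρ g : Matrix (Fin d) (Fin d) ℂ) * Y * (ρ g : Matrix (Fin d) (Fin d) ℂ)ᴴ) =
        (Real.cos (2 * π * (g.val : ℝ) / N) * (π' Y).1 -
            Real.sin (2 * π * (g.val : ℝ) / N) * (π' Y).2,
         Real.sin (2 * π * (g.val : ℝ) / N) * (π' Y).1 +
            Real.cos (2 * π * (g.val : ℝ) / N) * (π' Y).2)) :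
    ∃ K : Finset (ZMod N), K.card ≤ d ∧ SosValid N K := by
  have : NeZero N := ⟨by omega⟩
  simpa only [Fintype.card_fin] using equivariant_psd_lift_gives_sosValid_general
    (ρ := fun g => (ρ g : Matrix (Fin d) (Fin d) ℂ)) (fun g g' => congrArg Units.val (hρ g g'))
    hlift hinv hequiv
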